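/- Let h > 0 and a ∈ ℝ. Then for every real ξ ≠ 0, exp(−(a²/2)·((hξ/2)·coth(hξ/2) − 1)) = exp(−a²·∑_{k=1}^∞ ξ²/((2πk/h)² + ξ²)), where the series on the right converges. (This expresses the factor φ_Y(ξ) of Lévy's conditional characteristic function of the Lévy area as an infinite product of compound Poisson characteristic functions.) -/

import Mathlib

/-!
The Mittag-Leffler expansion of the cotangent, evaluated at `z * I`, becomes the partial fraction
expansion `(z * coth z - 1) / 2 = ∑ k ≥ 1, z² / (z² + (π * k)²)`. At `z = h * ξ / 2` its `k`-th term
is `ξ² / ((2 * π * k / h)² + ξ²)`.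
-/

section

open Complex
open scoped Real

lemma hasSum_cotTerm {x : ℂ} (hx : x ∈ integerComplement) :
    HasSum (cotTerm x) (π * cot (π * x) - 1 / x) :=
  (summable_cotTerm hx).hasSum_iff_tendsto_nat.mpr (tendsto_logDeriv_euler_cot_sub hx)

lemma div_pi_mem_integerComplement {z : ℂ} (hz : sin z ≠ 0) : z / π ∈ integerComplement := by
  rintro ⟨n, hn⟩
  exact hz (sin_eq_zero_iff.mpr ⟨n, (div_eq_iff (ofReal_ne_zero.mpr Real.pi_ne_zero)).mp hn.symm⟩)

lemma div_two_mul_cotTerm {x : ℂ} (hx : x ∈ integerComplement) (k : ℕ) :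
    x / 2 * cotTerm x k = x ^ 2 / (x ^ 2 - (k + 1) ^ 2) := by
  rw [cotTerm_identity hx, ← sq_sub_sq]
  ring

lemma hasSum_mul_cot_sub_one_div_two {z : ℂ} (hz : sin z ≠ 0) :
    HasSum (fun k : ℕ ↦ z ^ 2 / (z ^ 2 - (π * (k + 1)) ^ 2)) ((z * cot z - 1) / 2) := by
  have hπ : (π : ℂ) ≠ 0 := ofReal_ne_zero.mpr Real.pi_ne_zero
  have hx := div_pi_mem_integerComplement hz
  have hz₀ : z ≠ 0 := (div_ne_zero_iff.mp (integerComplement.ne_zero hx)).1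
  have hterm (k : ℕ) :
      z ^ 2 / (z ^ 2 - (π * (k + 1)) ^ 2) = z / π / 2 * cotTerm (z / π) k := by
    rw [div_two_mul_cotTerm hx]
    field_simp
  have hsum : (z * cot z - 1) / 2 = z / π / 2 * (π * cot (π * (z / π)) - 1 / (z / π)) := by
    rw [mul_div_cancel₀ z hπ]
    field_simp
  rw [funext hterm, hsum]
  exact (hasSum_cotTerm hx).mul_left _

lemma mul_I_mul_cot_mul_I (z : ℂ) : z * I * cot (z * I) = z * (cosh z / sinh z) := by
  rw [cot_eq_cos_div_sin, cos_mul_I, sin_mul_I, mul_div_assoc', mul_right_comm,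
    mul_div_mul_right _ _ I_ne_zero, mul_div_assoc]

lemma hasSum_mul_coth_sub_one_div_two {z : ℂ} (hz : sinh z ≠ 0) :
    HasSum (fun k : ℕ ↦ z ^ 2 / (z ^ 2 + (π * (k + 1)) ^ 2))
      ((z * (cosh z / sinh z) - 1) / 2) := by
  have hsin : sin (z * I) ≠ 0 := by
    rw [sin_mul_I]
    exact mul_ne_zero hz I_ne_zero
  have hterm (k : ℕ) :
      (z * I) ^ 2 / ((z * I) ^ 2 - (π * (k + 1)) ^ 2) =
        z ^ 2 / (z ^ 2 + (π * (k + 1)) ^ 2) := by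
    rw [mul_pow z I, I_sq, mul_neg_one, ← neg_add', neg_div_neg_eq]
  simpa only [hterm, mul_I_mul_cot_mul_I] using hasSum_mul_cot_sub_one_div_two hsin

end

section

open Real

lemma hasSum_real_mul_coth_sub_one_div_two {x : ℝ} (hx : x ≠ 0) :
    HasSum (fun k : ℕ ↦ x ^ 2 / (x ^ 2 + (π * (k + 1)) ^ 2))
      ((x * (cosh x / sinh x) - 1) / 2) := by
  have hsinh : Complex.sinh x ≠ 0 := by exact_mod_cast sinh_ne_zero.mpr hx
  rw [← Complex.hasSum_ofReal]
  exact_mod_cast hasSum_mul_coth_sub_one_div_two hsinh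

lemma sq_div_two_pi_mul_div_sq_add_sq {h : ℝ} (hh : h ≠ 0) (ξ t : ℝ) :
    ξ ^ 2 / ((2 * π * t / h) ^ 2 + ξ ^ 2) =
      (h * ξ / 2) ^ 2 / ((h * ξ / 2) ^ 2 + (π * t) ^ 2) := by
  have hscale : (h / 2) ^ 2 ≠ 0 := pow_ne_zero 2 (div_ne_zero hh two_ne_zero)
  rw [← mul_div_mul_left _ _ hscale]
  congr 1
  · ring
  · field_simp
    ring

end

/-- **Rydén–Wiktorsson's compound Poisson representation of `φ_Y`.** For `h > 0`,
`a ∈ ℝ` and real `ξ ≠ 0`, the series `∑_{k≥1} ξ²/((2πk/h)² + ξ²)` converges to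
some `S`, and
`exp(−(a²/2)((hξ/2)·coth(hξ/2) − 1)) = exp(−a²·S)`,
where `coth z = cosh z / sinh z`. -/
theorem levy_area_phiY_poisson_rep (h : ℝ) (hh : 0 < h) (a : ℝ)
    (ξ : ℝ) (hξ : ξ ≠ 0) :
    ∃ S : ℝ,
      HasSum (fun k : ℕ =>
          ξ ^ 2 / ((2 * Real.pi * ((k : ℝ) + 1) / h) ^ 2 + ξ ^ 2)) S ∧
      Real.exp (-(a ^ 2 / 2) *
          ((h * ξ / 2) * (Real.cosh (h * ξ / 2) / Real.sinh (h * ξ / 2)) - 1))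
        = Real.exp (-a ^ 2 * S) := by
  have hz : h * ξ / 2 ≠ 0 := div_ne_zero (mul_ne_zero hh.ne' hξ) two_ne_zero
  refine ⟨(h * ξ / 2 * (Real.cosh (h * ξ / 2) / Real.sinh (h * ξ / 2)) - 1) / 2, ?_, ?_⟩
  · simpa only [sq_div_two_pi_mul_div_sq_add_sq hh.ne'] using
      hasSum_real_mul_coth_sub_one_div_two hz
  · congr 1
    ring
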